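/- arXiv:0901.4747 — 3 statements merged into one kernel-verified Lean document; each statement's English description precedes it below -/
import Mathlib

section
/- Let K be a field, let A be an n×n matrix over K, and let P be a monic irreducible polynomial over K. Let e be the multiplicity of P in the minimal polynomial of A and let m be the multiplicity of P in the characteristic polynomial of A. Then the nullity of the matrix P(A)^e equals m·deg(P), i.e., the dimension of the kernel of (the linear map given by) the e-th power of the evaluation of P at A is m times the degree of P. -/
/-!
Over a commutative ring, `X • 1 - A` divides `Q(X) • 1 - Q(A)` in the matrices over `R[X]`, so if
`Q(A) = 0`, then taking determinants shows that the characteristic polynomial of `A` divides a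
power of `Q`.

Write the minimal polynomial of `A` as `P ^ e * Q` and the characteristic polynomial as
`P ^ m * S`, with `P` dividing neither `Q` nor `S`. The space is the direct sum of the invariant
subspaces `ker P(A) ^ e` and `ker Q(A)`, and the characteristic polynomial is the product of those
of the two restrictions. The first divides a power of `P`, so it is a power of `P` up to a unit;
the second divides a power of `Q`, so it is prime to `P`. Hence the first is `P ^ m` up to a unit,
and its degree is the dimension of `ker P(A) ^ e`.
-/

open Module Polynomial

theorem sub_dvd_aeval_sub_aeval_of_commute {R S : Type*} [CommSemiring R] [Ring S] [Algebra R S]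
    {a b : S} (hab : Commute a b) (p : R[X]) : a - b ∣ aeval a p - aeval b p := by
  simp only [aeval_eq_sum_range, ← Finset.sum_sub_distrib, ← smul_sub]
  exact Finset.dvd_sum fun i _ => dvd_smul_of_dvd _ (hab.sub_dvd_pow_sub_pow i)

section CommRing

variable {R M ι : Type*} [CommRing R] [AddCommGroup M] [Module R M] [Fintype ι] [DecidableEq ι]

theorem charmatrix_dvd_scalar_of_aeval_eq_zero {A : Matrix ι ι R} {p : R[X]}
    (hp : aeval A p = 0) : A.charmatrix ∣ Matrix.scalar ι p := by
  have hX : aeval (Matrix.scalar ι (X : R[X])) p = Matrix.scalar ι p := by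
    simpa using aeval_algHom_apply (Matrix.scalarAlgHom ι R) (X : R[X]) p
  have hA : aeval (C.mapMatrix A) p = 0 := by
    have hmap := aeval_algHom_apply (CAlgHom (R := R) (A := R)).mapMatrix A p
    rwa [hp, map_zero] at hmap
  have hdvd := sub_dvd_aeval_sub_aeval_of_commute
    (Matrix.scalar_commute (X : R[X]) (Commute.all X) (C.mapMatrix A)) p
  rwa [hX, hA, sub_zero] at hdvd

theorem charpoly_dvd_pow_card_of_aeval_eq_zero {A : Matrix ι ι R} {p : R[X]}
    (hp : aeval A p = 0) : A.charpoly ∣ p ^ Fintype.card ι := by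
  simpa [Matrix.charpoly] using
    map_dvd Matrix.detMonoidHom (charmatrix_dvd_scalar_of_aeval_eq_zero hp)

theorem charpoly_dvd_pow_finrank_of_aeval_eq_zero [Module.Free R M] [Module.Finite R M]
    {f : End R M} {p : R[X]} (hp : aeval f p = 0) : f.charpoly ∣ p ^ finrank R M := by
  nontriviality R
  let b := Free.chooseBasis R M
  have hA : aeval (LinearMap.toMatrixAlgEquiv b f) p = 0 := by
    rw [aeval_algHom_apply, hp, map_zero]
  rw [finrank_eq_card_chooseBasisIndex, ← LinearMap.charpoly_toMatrix f b]
  exact charpoly_dvd_pow_card_of_aeval_eq_zero hA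

theorem coe_aeval_restrict_apply (f : End R M) {U : Submodule R M} (hU : ∀ x ∈ U, f x ∈ U)
    (p : R[X]) (x : U) : (aeval (f.restrict hU) p x : M) = aeval f p x := by
  simp only [aeval_endomorphism, sum_def, End.pow_restrict _ hU, Submodule.coe_sum,
    Submodule.coe_smul, LinearMap.coe_restrict_apply]

theorem apply_mem_ker_aeval (f : End R M) (p : R[X]) :
    ∀ x ∈ (aeval f p).ker, f x ∈ (aeval f p).ker := by
  intro x hx
  have hcomm : Commute (aeval f p) f := by simpa using (Commute.all p X).map (aeval f)
  rw [LinearMap.mem_ker, ← End.mul_apply, hcomm.eq, End.mul_apply, LinearMap.mem_ker.mp hx,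
    map_zero]

theorem aeval_restrict_ker_aeval (f : End R M) (p : R[X]) :
    aeval (f.restrict (apply_mem_ker_aeval f p)) p = 0 := by
  ext x
  rw [coe_aeval_restrict_apply]
  exact x.2

theorem isCompl_ker_aeval_of_isCoprime {f : End R M} {p q : R[X]} (hpq : IsCoprime p q)
    (hf : aeval f (p * q) = 0) : IsCompl (aeval f p).ker (aeval f q).ker where
  disjoint := disjoint_ker_aeval_of_isCoprime f hpq
  codisjoint := by
    rw [codisjoint_iff, sup_ker_aeval_eq_ker_aeval_mul_of_coprime f hpq, hf, LinearMap.ker_zero]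

theorem charpoly_eq_charpoly_restrict_mul_of_isCompl (f : End R M) {U W : Submodule R M}
    [Module.Free R U] [Module.Finite R U] [Module.Free R W] [Module.Finite R W]
    [Module.Free R M] [Module.Finite R M]
    (hUW : IsCompl U W) (hU : ∀ x ∈ U, f x ∈ U) (hW : ∀ x ∈ W, f x ∈ W) :
    f.charpoly = (f.restrict hU).charpoly * (f.restrict hW).charpoly := by
  let e := U.prodEquivOfIsCompl W hUW
  have hconj : e.conj ((f.restrict hU).prodMap (f.restrict hW)) = f := by
    ext x
    obtain ⟨y, rfl⟩ := e.surjective x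
    simp [e, LinearEquiv.conj_apply]
  rw [← LinearMap.charpoly_prodMap, ← e.charpoly_conj, hconj]

end CommRing

section Field

variable {K V : Type*} [Field K] [AddCommGroup V] [Module K V] [FiniteDimensional K V]
  {P Q : K[X]} {k : ℕ}

theorem not_dvd_charpoly_of_aeval_eq_zero {f : End K V} (hP : Irreducible P) (hPQ : ¬ P ∣ Q)
    (hf : aeval f Q = 0) : ¬ P ∣ f.charpoly := fun hdvd =>
  hPQ (hP.prime.dvd_of_dvd_pow (hdvd.trans (charpoly_dvd_pow_finrank_of_aeval_eq_zero hf)))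

theorem finrank_eq_multiplicity_charpoly_mul_natDegree {f : End K V} (hP : Irreducible P)
    (hf : aeval f (P ^ k) = 0) : finrank K V = multiplicity P f.charpoly * P.natDegree := by
  have hdvd : f.charpoly ∣ P ^ (k * finrank K V) := by
    rw [pow_mul]
    exact charpoly_dvd_pow_finrank_of_aeval_eq_zero hf
  obtain ⟨a, -, ha⟩ := (dvd_prime_pow hP.prime _).mp hdvd
  rw [multiplicity_eq_of_associated_right ha, multiplicity_pow_self_of_prime hP.prime,
    ← natDegree_pow, ← f.charpoly_natDegree,
    natDegree_eq_of_degree_eq (degree_eq_degree_of_associated ha)]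

theorem finrank_ker_aeval_pow_eq_multiplicity_mul_natDegree {f : End K V} (hP : Irreducible P)
    (hPQ : ¬ P ∣ Q) (hf : aeval f (P ^ k * Q) = 0) :
    finrank K (aeval f (P ^ k)).ker = multiplicity P f.charpoly * P.natDegree := by
  have hcop : IsCoprime (P ^ k) Q := (hP.coprime_iff_not_dvd.mpr hPQ).pow_left
  have hchar := charpoly_eq_charpoly_restrict_mul_of_isCompl f
    (isCompl_ker_aeval_of_isCoprime hcop hf) (apply_mem_ker_aeval f _) (apply_mem_ker_aeval f _)
  have hfin : FiniteMultiplicity P f.charpoly :=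
    .of_prime_left hP.prime f.charpoly_monic.ne_zero
  have hker : ¬ P ∣ (f.restrict (apply_mem_ker_aeval f Q)).charpoly :=
    not_dvd_charpoly_of_aeval_eq_zero hP hPQ (aeval_restrict_ker_aeval f Q)
  rw [hchar] at hfin ⊢
  rw [multiplicity_mul hP.prime hfin, multiplicity_eq_zero.mpr hker, add_zero]
  exact finrank_eq_multiplicity_charpoly_mul_natDegree hP (aeval_restrict_ker_aeval f _)

theorem nullity_aeval_pow_eq_mul_natDegree_general (f : End K V) (hP : Irreducible P)
    (hk : ¬ P ^ (k + 1) ∣ minpoly K f) :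
    finrank K (aeval f P ^ k).ker = multiplicity P f.charpoly * P.natDegree := by
  have hfin : FiniteMultiplicity P (minpoly K f) := ⟨k, hk⟩
  obtain ⟨Q, hQ, hPQ⟩ := hfin.exists_eq_pow_mul_and_not_dvd
  have hle : multiplicity P (minpoly K f) ≤ k :=
    Nat.lt_succ_iff.mp (hfin.multiplicity_lt_iff_not_dvd.mpr hk)
  have hdvd : minpoly K f ∣ P ^ k * Q := by
    rw [hQ]
    exact mul_dvd_mul_right (pow_dvd_pow P hle) Q
  rw [← map_pow]
  exact finrank_ker_aeval_pow_eq_multiplicity_mul_natDegree hP hPQ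
    (aeval_eq_zero_of_dvd_aeval_eq_zero hdvd (minpoly.aeval K f))

end Field

/-- The nullity method: if `e` is the multiplicity of the monic irreducible
polynomial `P` in the minimal polynomial of `A`, and `m` its multiplicity in the
characteristic polynomial of `A`, then the nullity of `P(A)^e` is `m * deg P`. -/
theorem nullity_aeval_pow_eq_mul_natDegree
    {K : Type*} [Field K] {n : ℕ} (A : Matrix (Fin n) (Fin n) K)
    (P : Polynomial K) (hPmonic : P.Monic) (hPirr : Irreducible P)
    (e m : ℕ)
    (heDvd : P ^ e ∣ minpoly K A) (heNotDvd : ¬ P ^ (e + 1) ∣ minpoly K A)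
    (hmDvd : P ^ m ∣ A.charpoly) (hmNotDvd : ¬ P ^ (m + 1) ∣ A.charpoly) :
    Module.finrank K
        (LinearMap.ker ((Polynomial.aeval A P ^ e).mulVecLin)) =
      m * P.natDegree := by
  have haeval : aeval A.toLin' P ^ e = (aeval A P ^ e).mulVecLin := by
    rw [← Matrix.toLin'_apply', Matrix.toLin'_pow]
    exact congrArg (· ^ e) (aeval_algHom_apply Matrix.toLinAlgEquiv' A P)
  rw [← haeval, nullity_aeval_pow_eq_mul_natDegree_general _ hPirr
    (by rwa [Matrix.minpoly_toLin']), Matrix.charpoly_toLin',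
    multiplicity_eq_of_dvd_of_not_dvd hmDvd hmNotDvd]
end

section
/- Let K be a finite field, let P be a monic irreducible polynomial over K of degree d, and let e ≥ 1 be an integer. Let A be a square matrix of size e·d over K whose minimal polynomial and characteristic polynomial both equal P^e (for instance the block Jordan matrix J_{P^e}, or the companion matrix of P^e). Then for every integer k ≥ 0, the nullity of P(A)^k equals min(k, e)·d. -/
/-!
Suppose the minimal polynomial of `f` has degree `dim V` and factors as `p * q`. The minimal
polynomial `r` of the restriction of `f` to the range of `q(f)` satisfies `p * q ∣ r * q`, so this
range has dimension at least `deg r ≥ deg p`. By symmetry the range of `p(f)` has dimension at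
least `deg q`. As the range of `q(f)` lies in the kernel of `p(f)` and `deg p + deg q = dim V`,
rank-nullity turns these bounds into equalities: `p(f)` has nullity `deg p`. Bézout's identity
extends this to arbitrary `p`, since `p(f)` has the same kernel as `gcd(p, minpoly f)(f)`.
-/

open LinearMap Module Polynomial

section Semiring

variable {R M : Type*} [CommSemiring R] [AddCommMonoid M] [Module R M]

theorem map_aeval_apply_of_comp_eq {N : Type*} [AddCommMonoid N] [Module R N] {f : End R M}
    {g : End R N} {φ : M →ₗ[R] N} (h : φ ∘ₗ f = g ∘ₗ φ) (p : R[X]) (v : M) :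
    φ (aeval f p v) = aeval g p (φ v) := by
  induction p using Polynomial.induction_on' with
  | add p q hp hq => simp only [map_add, LinearMap.add_apply, hp, hq]
  | monomial n a =>
    have hpow : φ ((f ^ n) v) = (g ^ n) (φ v) :=
      (LinearMap.congr_fun (End.commute_pow_left_of_commute h.symm n) v).symm
    simp only [aeval_monomial, End.mul_apply, algebraMap_end_apply, map_smul, hpow]

theorem apply_mem_range_aeval (f : End R M) (q : R[X]) :
    ∀ v ∈ range (aeval f q), f v ∈ range (aeval f q) := by
  rintro _ ⟨v, rfl⟩
  exact ⟨f v, (map_aeval_apply_of_comp_eq rfl q v).symm⟩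

theorem ker_aeval_le_ker_aeval_of_dvd {f : End R M} {p q : R[X]} (h : p ∣ q) :
    ker (aeval f p) ≤ ker (aeval f q) := by
  obtain ⟨c, rfl⟩ := h
  rw [mul_comm, map_mul]
  exact ker_le_ker_comp _ _

end Semiring

section Field

variable {K V : Type*} [Field K] [AddCommGroup V] [Module K V] {f : End K V} {p q : K[X]}

theorem ker_aeval_gcd [DecidableEq K[X]] (f : End K V) (p q : K[X]) :
    ker (aeval f (EuclideanDomain.gcd p q)) = ker (aeval f p) ⊓ ker (aeval f q) := by
  refine le_antisymm
    (le_inf (ker_aeval_le_ker_aeval_of_dvd (EuclideanDomain.gcd_dvd_left p q))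
      (ker_aeval_le_ker_aeval_of_dvd (EuclideanDomain.gcd_dvd_right p q))) ?_
  rintro v ⟨hp, hq⟩
  rw [SetLike.mem_coe, mem_ker] at hp hq
  rw [mem_ker, EuclideanDomain.gcd_eq_gcd_ab, mul_comm p, mul_comm q]
  simp only [map_add, map_mul, LinearMap.add_apply, End.mul_apply, hp, hq, map_zero, add_zero]

theorem minpoly_dvd_minpoly_restrict_mul {W : Submodule K V} (hW : ∀ v ∈ W, f v ∈ W)
    (hq : range (aeval f q) ≤ W) : minpoly K f ∣ minpoly K (f.restrict hW) * q := by
  refine minpoly.dvd K f (LinearMap.ext fun v => ?_)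
  let w : W := ⟨aeval f q v, hq (mem_range_self _ v)⟩
  have hw : W.subtype (aeval (f.restrict hW) (minpoly K (f.restrict hW)) w) =
      aeval f (minpoly K (f.restrict hW)) w :=
    map_aeval_apply_of_comp_eq (subtype_comp_restrict hW) _ w
  rw [map_mul, End.mul_apply, LinearMap.zero_apply]
  rw [minpoly.aeval, LinearMap.zero_apply, map_zero] at hw
  exact hw.symm

variable [FiniteDimensional K V]

theorem natDegree_minpoly_le_finrank (f : End K V) : (minpoly K f).natDegree ≤ finrank K V :=
  f.charpoly_natDegree ▸ natDegree_le_of_dvd f.minpoly_dvd_charpoly f.charpoly_monic.ne_zero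

theorem natDegree_le_finrank_range_aeval (h : p * q ∣ minpoly K f) :
    p.natDegree ≤ finrank K (range (aeval f q)) := by
  let g := f.restrict (apply_mem_range_aeval f q)
  have hq : q ≠ 0 :=
    ne_zero_of_dvd_ne_zero (minpoly.ne_zero_of_finite K f) ((dvd_mul_left q p).trans h)
  have hdvd : p ∣ minpoly K g :=
    (mul_dvd_mul_iff_right hq).1 (h.trans (minpoly_dvd_minpoly_restrict_mul _ le_rfl))
  exact (natDegree_le_of_dvd hdvd (minpoly.ne_zero_of_finite K g)).trans
    (natDegree_minpoly_le_finrank g)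

theorem finrank_ker_aeval_of_dvd_minpoly (hf : minpoly K f = f.charpoly) (hp : p ∣ minpoly K f) :
    finrank K (ker (aeval f p)) = p.natDegree := by
  obtain ⟨q, hpq⟩ := hp
  have hp_le : p.natDegree ≤ finrank K (range (aeval f q)) :=
    natDegree_le_finrank_range_aeval hpq.symm.dvd
  have hq_le : q.natDegree ≤ finrank K (range (aeval f p)) :=
    natDegree_le_finrank_range_aeval (mul_comm q p ▸ hpq.symm.dvd)
  have hrange_le_ker : finrank K (range (aeval f q)) ≤ finrank K (ker (aeval f p)) := by
    refine Submodule.finrank_mono (range_le_ker_iff.2 ?_)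
    rw [← End.mul_eq_comp, ← map_mul, ← hpq, minpoly.aeval]
  have hdegree : p.natDegree + q.natDegree = finrank K V := by
    have hpq_ne : p * q ≠ 0 := hpq ▸ minpoly.ne_zero_of_finite K f
    rw [← natDegree_mul (left_ne_zero_of_mul hpq_ne) (right_ne_zero_of_mul hpq_ne), ← hpq, hf,
      charpoly_natDegree]
  have hrank_nullity := (aeval f p).finrank_range_add_finrank_ker
  lia

theorem finrank_ker_aeval_eq_natDegree_gcd [DecidableEq K[X]] (hf : minpoly K f = f.charpoly)
    (p : K[X]) :
    finrank K (ker (aeval f p)) = (EuclideanDomain.gcd p f.charpoly).natDegree := by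
  rw [← hf, ← finrank_ker_aeval_of_dvd_minpoly hf (EuclideanDomain.gcd_dvd_right _ _),
    ker_aeval_gcd, minpoly.aeval, ker_zero, inf_top_eq]

end Field

theorem finrank_ker_mulVecLin_aeval_eq_natDegree_gcd {K n : Type*} [Field K] [DecidableEq K[X]]
    [Fintype n] [DecidableEq n] {A : Matrix n n K} (hA : minpoly K A = A.charpoly) (p : K[X]) :
    finrank K (ker (aeval A p).mulVecLin) = (EuclideanDomain.gcd p A.charpoly).natDegree := by
  have haeval : aeval A.toLin' p = (aeval A p).mulVecLin :=
    aeval_algHom_apply Matrix.toLinAlgEquiv'.toAlgHom A p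
  rw [← haeval, ← A.charpoly_toLin', finrank_ker_aeval_eq_natDegree_gcd]
  rw [A.minpoly_toLin', A.charpoly_toLin', hA]

theorem natDegree_gcd_pow_pow {K : Type*} [Field K] [DecidableEq K[X]] (P : K[X]) (k e : ℕ) :
    (EuclideanDomain.gcd (P ^ k) (P ^ e)).natDegree = min k e * P.natDegree := by
  have hassoc : Associated (EuclideanDomain.gcd (P ^ k) (P ^ e)) (P ^ min k e) := by
    refine associated_of_dvd_dvd ?_ (EuclideanDomain.dvd_gcd
      (pow_dvd_pow P (min_le_left k e)) (pow_dvd_pow P (min_le_right k e)))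
    rcases min_choice k e with h | h <;> rw [h]
    exacts [EuclideanDomain.gcd_dvd_left _ _, EuclideanDomain.gcd_dvd_right _ _]
  rw [natDegree_eq_of_degree_eq (degree_eq_degree_of_associated hassoc), natDegree_pow]

theorem nullity_aeval_pow_of_minpoly_eq_charpoly_eq_pow_general {K n : Type*} [Field K] [Fintype n]
    [DecidableEq n] (P : K[X]) (e : ℕ) (A : Matrix n n K) (hmin : minpoly K A = P ^ e)
    (hchar : A.charpoly = P ^ e) (k : ℕ) :
    finrank K (ker (aeval A P ^ k).mulVecLin) = min k e * P.natDegree := by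
  classical
  rw [← map_pow, finrank_ker_mulVecLin_aeval_eq_natDegree_gcd (hmin.trans hchar.symm), hchar,
    natDegree_gcd_pow_pow]

/-- If `A` is a square matrix of size `e * d` over a finite field whose minimal
and characteristic polynomials both equal `P ^ e`, for `P` monic irreducible of
degree `d` and `e ≥ 1`, then for every `k ≥ 0` the nullity of `P(A)^k` equals
`min k e * d`. -/
theorem nullity_aeval_pow_of_minpoly_eq_charpoly_eq_pow
    {K : Type*} [Field K] [Fintype K]
    (P : Polynomial K) (hPmonic : P.Monic) (hPirr : Irreducible P)
    (d : ℕ) (hd : P.natDegree = d) (e : ℕ) (he : 1 ≤ e)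
    (A : Matrix (Fin (e * d)) (Fin (e * d)) K)
    (hmin : minpoly K A = P ^ e) (hchar : A.charpoly = P ^ e) :
    ∀ k : ℕ,
      Module.finrank K
          (LinearMap.ker ((Polynomial.aeval A P ^ k).mulVecLin)) =
        min k e * d := by
  subst hd
  exact nullity_aeval_pow_of_minpoly_eq_charpoly_eq_pow_general P e A hmin hchar
end

section
/- Let K be a finite field, let P be a monic irreducible polynomial over K of degree d, and let A be a block diagonal matrix whose diagonal blocks B_1, …, B_r are square matrices over K such that the minimal polynomial and the characteristic polynomial of B_l both equal P^{k_l} for positive integers k_1, …, k_r. Then for every integer j ≥ 0, the nullity of P(A)^j equals d · Σ_{l=1}^{r} min(j, k_l). In particular, writing n_k for the number of indices l with k_l = k and e = max_l k_l, the nullity ν_j of P(A)^j satisfies ν_j = d·(Σ_{k=1}^{j} k·n_k + Σ_{k=j+1}^{e} j·n_k). -/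
/-!
Let `f` be an endomorphism of a finite-dimensional space. Some vector `v` has annihilator exactly
`minpoly K f` (a finitely generated module over the PID `K[X]` contains an element with the same
annihilator as the whole module). Hence, if `minpoly K f = g * h`, the vectors `(h * q)(f) v` with
`deg q < deg g` form a `deg g`-dimensional subspace of the range of `h(f)`, which lies in the
kernel of `g(f)`. When `deg (minpoly K f)` is the whole dimension, the same bound with `g` and `h`
exchanged and rank-nullity force the nullity of `g(f)` to be `deg g`. If `minpoly K f = P ^ k`,
take `g = P ^ j` for `j ≤ k`; for `j ≥ k` the operator `P(f) ^ j` vanishes. On a block diagonal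
matrix the nullities add up.
-/

open Polynomial Module

section Endomorphism

variable {K V : Type*} [Field K] [AddCommGroup V] [Module K V] [FiniteDimensional K V]

theorem exists_forall_aeval_apply_eq_zero_iff_minpoly_dvd (f : End K V) :
    ∃ v : V, ∀ q : K[X], aeval f q v = 0 ↔ minpoly K f ∣ q := by
  obtain ⟨x, hx⟩ := exists_ker_toSpanSingleton_eq_annihilator K[X] (AEval' f)
  obtain ⟨v, rfl⟩ := (AEval'.of f).surjective x
  refine ⟨v, fun q => ?_⟩
  rw [← Ideal.mem_span_singleton, span_minpoly_eq_annihilator, ← hx, LinearMap.mem_ker,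
    LinearMap.toSpanSingleton_apply, AEval'.of, ← AEval.of_aeval_smul,
    LinearEquiv.map_eq_zero_iff, End.smul_def]

theorem natDegree_le_finrank_range_aeval_of_mul_eq_minpoly {f : End K V} {g h : K[X]}
    (hgh : g * h = minpoly K f) : g.natDegree ≤ finrank K (aeval f h).range := by
  obtain ⟨v, hv⟩ := exists_forall_aeval_apply_eq_zero_iff_minpoly_dvd f
  have hgh_ne : g * h ≠ 0 := hgh ▸ minpoly.ne_zero (Algebra.IsIntegral.isIntegral f)
  obtain ⟨hg, hh⟩ := mul_ne_zero_iff.1 hgh_ne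
  let φ : degreeLT K g.natDegree →ₗ[K] V :=
    aeval f h ∘ₗ LinearMap.applyₗ v ∘ₗ (aeval f).toLinearMap ∘ₗ (degreeLT K g.natDegree).subtype
  have hφ : Function.Injective φ := by
    rw [injective_iff_map_eq_zero]
    rintro ⟨q, hq⟩ hφq
    have hdvd : h * g ∣ h * q := by
      rw [mul_comm h g, hgh, ← hv, map_mul]
      exact hφq
    refine Subtype.ext (eq_zero_of_dvd_of_degree_lt ((mul_dvd_mul_iff_left hh).1 hdvd) ?_)
    rw [degree_eq_natDegree hg]
    exact mem_degreeLT.1 hq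
  calc g.natDegree = finrank K (degreeLT K g.natDegree) := by
        rw [(degreeLTEquiv K _).finrank_eq, finrank_fin_fun]
    _ = finrank K φ.range := (LinearMap.finrank_range_of_inj hφ).symm
    _ ≤ finrank K (aeval f h).range := Submodule.finrank_mono (LinearMap.range_comp_le_range _ _)

theorem finrank_ker_aeval_of_dvd_minpoly_s6 {f : End K V}
    (hf : (minpoly K f).natDegree = finrank K V) {g : K[X]} (hg : g ∣ minpoly K f) :
    finrank K (aeval f g).ker = g.natDegree := by
  obtain ⟨h, hgh⟩ := hg
  have hgh_ne : g * h ≠ 0 := hgh ▸ minpoly.ne_zero (Algebra.IsIntegral.isIntegral f)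
  have hrange_le_ker : (aeval f h).range ≤ (aeval f g).ker := by
    rw [LinearMap.range_le_ker_iff, ← End.mul_eq_comp, ← map_mul, ← hgh, minpoly.aeval]
  have hlower : g.natDegree ≤ finrank K (aeval f g).ker :=
    (natDegree_le_finrank_range_aeval_of_mul_eq_minpoly hgh.symm).trans
      (Submodule.finrank_mono hrange_le_ker)
  have hrange : h.natDegree ≤ finrank K (aeval f g).range :=
    natDegree_le_finrank_range_aeval_of_mul_eq_minpoly (mul_comm h g ▸ hgh.symm)
  have hrank_nullity := (aeval f g).finrank_range_add_finrank_ker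
  have hdegree : g.natDegree + h.natDegree = finrank K V := by
    rw [← hf, hgh, natDegree_mul (left_ne_zero_of_mul hgh_ne) (right_ne_zero_of_mul hgh_ne)]
  omega

theorem finrank_ker_aeval_pow_of_minpoly_eq_pow {f : End K V}
    (hf : (minpoly K f).natDegree = finrank K V) {P : K[X]} {k : ℕ}
    (hmin : minpoly K f = P ^ k) (j : ℕ) :
    finrank K (aeval f P ^ j).ker = P.natDegree * min j k := by
  obtain hjk | hkj := le_total j k
  · rw [← map_pow, finrank_ker_aeval_of_dvd_minpoly_s6 hf (hmin ▸ pow_dvd_pow P hjk), natDegree_pow,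
      min_eq_left hjk, mul_comm]
  · have hzero : aeval f P ^ k = 0 := by rw [← map_pow, ← hmin, minpoly.aeval]
    rw [pow_eq_zero_of_le hkj hzero, LinearMap.ker_zero, finrank_top, ← hf, hmin, natDegree_pow,
      min_eq_right hkj, mul_comm]

end Endomorphism

theorem finrank_ker_mulVecLin_aeval_pow_of_minpoly_eq_pow {K n : Type*} [Field K] [Fintype n]
    [DecidableEq n] {B : Matrix n n K} {P : K[X]} {k : ℕ} (hmin : minpoly K B = P ^ k)
    (hchar : B.charpoly = P ^ k) (j : ℕ) :
    finrank K (aeval B P ^ j).mulVecLin.ker = P.natDegree * min j k := by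
  have hmin_toLin : minpoly K (Matrix.toLinAlgEquiv' B) = P ^ k := by
    rw [minpoly.algEquiv_eq, hmin]
  have hdegree : (minpoly K (Matrix.toLinAlgEquiv' B)).natDegree = finrank K (n → K) := by
    rw [hmin_toLin, ← hchar, B.charpoly_natDegree_eq_dim, finrank_fintype_fun_eq_card]
  have haeval : aeval (Matrix.toLinAlgEquiv' B) P = Matrix.toLinAlgEquiv' (aeval B P) :=
    aeval_algHom_apply Matrix.toLinAlgEquiv'.toAlgHom B P
  have hpow : (aeval B P ^ j).mulVecLin = aeval (Matrix.toLinAlgEquiv' B) P ^ j := by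
    rw [haeval, ← map_pow Matrix.toLinAlgEquiv']
    rfl
  rw [hpow, finrank_ker_aeval_pow_of_minpoly_eq_pow hdegree hmin_toLin]

section BlockDiagonal

variable {o : Type*} {m n : o → Type*} [Fintype o] [DecidableEq o] [∀ l, Fintype (n l)]

theorem blockDiagonal'_mulVec_apply {R : Type*} [NonUnitalNonAssocSemiring R]
    (M : ∀ l, Matrix (m l) (n l) R) (v : (Σ l, n l) → R) (l : o) (a : m l) :
    (Matrix.blockDiagonal' M).mulVec v ⟨l, a⟩ = (M l).mulVec (fun b => v ⟨l, b⟩) a := by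
  simp only [Matrix.mulVec, dotProduct, Fintype.sum_sigma]
  rw [Fintype.sum_eq_single l fun l' hne => Finset.sum_eq_zero fun b _ => by
    rw [Matrix.blockDiagonal'_apply_ne _ _ _ hne.symm, zero_mul]]
  simp only [Matrix.blockDiagonal'_apply_eq]

theorem mem_ker_mulVecLin_blockDiagonal' {R : Type*} [CommSemiring R]
    {M : ∀ l, Matrix (m l) (n l) R} {v : (Σ l, n l) → R} :
    v ∈ (Matrix.blockDiagonal' M).mulVecLin.ker ↔
      ∀ l, (fun b => v ⟨l, b⟩) ∈ (M l).mulVecLin.ker := by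
  simp only [LinearMap.mem_ker, Matrix.mulVecLin_apply, funext_iff, Sigma.forall,
    blockDiagonal'_mulVec_apply, Pi.zero_apply]

theorem finrank_ker_mulVecLin_blockDiagonal' {K : Type*} [Field K]
    (M : ∀ l, Matrix (m l) (n l) K) :
    finrank K (Matrix.blockDiagonal' M).mulVecLin.ker =
      ∑ l, finrank K (M l).mulVecLin.ker := by
  let kerEquiv : (Matrix.blockDiagonal' M).mulVecLin.ker ≃ₗ[K] ∀ l, (M l).mulVecLin.ker :=
    { toFun := fun v l => ⟨fun b => v.1 ⟨l, b⟩, mem_ker_mulVecLin_blockDiagonal'.1 v.2 l⟩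
      invFun := fun w => ⟨fun b => (w b.1).1 b.2,
        mem_ker_mulVecLin_blockDiagonal'.2 fun l => (w l).2⟩
      map_add' := fun _ _ => rfl
      map_smul' := fun _ _ => rfl }
  rw [kerEquiv.finrank_eq, finrank_pi_fintype]

theorem aeval_blockDiagonal' [∀ l, DecidableEq (n l)] {R : Type*} [CommSemiring R]
    (M : ∀ l, Matrix (n l) (n l) R) (p : R[X]) :
    aeval (Matrix.blockDiagonal' M) p = Matrix.blockDiagonal' fun l => aeval (M l) p := by
  induction p using Polynomial.induction_on' with
  | add p q hp hq =>
    simp only [map_add, hp, hq]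
    exact (Matrix.blockDiagonal'_add _ _).symm
  | monomial i a =>
    simp only [aeval_monomial, ← Algebra.smul_def, ← Matrix.blockDiagonal'_pow]
    exact (Matrix.blockDiagonal'_smul _ _).symm

end BlockDiagonal

theorem sum_min_eq_sum_Icc_mul_card_filter {ι : Type*} {s : Finset ι} {κ : ι → ℕ} {e : ℕ}
    (he : ∀ l ∈ s, κ l ≤ e) (j : ℕ) :
    ∑ l ∈ s, min j (κ l) =
      (∑ k ∈ Finset.Icc 1 j, k * (s.filter fun l => κ l = k).card) +
        ∑ k ∈ Finset.Icc (j + 1) e, j * (s.filter fun l => κ l = k).card := by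
  simp only [Finset.card_filter, Finset.mul_sum, mul_ite, mul_one, mul_zero]
  rw [Finset.sum_comm, Finset.sum_comm (s := Finset.Icc (j + 1) e), ← Finset.sum_add_distrib]
  refine Finset.sum_congr rfl fun l hl => ?_
  have hle : κ l ≤ e := he l hl
  simp only [Finset.sum_ite_eq, Finset.mem_Icc]
  split_ifs <;> omega

theorem nullity_aeval_pow_blockDiagonal'_general {K o : Type*} [Field K] [Fintype o]
    [DecidableEq o] {n : o → Type*} [∀ l, Fintype (n l)] [∀ l, DecidableEq (n l)] (P : K[X])
    (B : ∀ l, Matrix (n l) (n l) K) (κ : o → ℕ) (hmin : ∀ l, minpoly K (B l) = P ^ κ l)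
    (hchar : ∀ l, (B l).charpoly = P ^ κ l) (j : ℕ) :
    finrank K (aeval (Matrix.blockDiagonal' B) P ^ j).mulVecLin.ker =
        P.natDegree * ∑ l, min j (κ l) ∧
      finrank K (aeval (Matrix.blockDiagonal' B) P ^ j).mulVecLin.ker =
        P.natDegree * ((∑ k ∈ Finset.Icc 1 j,
            k * (Finset.univ.filter fun l => κ l = k).card) +
          ∑ k ∈ Finset.Icc (j + 1) (Finset.univ.sup κ),
            j * (Finset.univ.filter fun l => κ l = k).card) := by
  rw [← sum_min_eq_sum_Icc_mul_card_filter fun _ => Finset.le_sup, and_self]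
  calc finrank K (aeval (Matrix.blockDiagonal' B) P ^ j).mulVecLin.ker
      = ∑ l, finrank K (aeval (B l) P ^ j).mulVecLin.ker := by
        rw [aeval_blockDiagonal', ← Matrix.blockDiagonal'_pow,
          finrank_ker_mulVecLin_blockDiagonal']
        simp only [Pi.pow_apply]
    _ = ∑ l, P.natDegree * min j (κ l) :=
        Finset.sum_congr rfl fun l _ =>
          finrank_ker_mulVecLin_aeval_pow_of_minpoly_eq_pow (hmin l) (hchar l) j
    _ = P.natDegree * ∑ l, min j (κ l) := (Finset.mul_sum _ _ _).symm

/-- Let `A` be block diagonal with blocks `B l` whose minimal and characteristic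
polynomials both equal `P ^ kk l`, for `P` monic irreducible of degree `d` over a
finite field. Then the nullity of `P(A)^j` equals `d * Σ_l min j (kk l)`;
in particular, writing `n_k` for the number of blocks with `kk l = k` and
`e = max_l kk l`, it equals `d * (Σ_{k=1}^{j} k n_k + Σ_{k=j+1}^{e} j n_k)`. -/
theorem nullity_aeval_pow_blockDiagonal'
    {K : Type*} [Field K] [Fintype K]
    (P : Polynomial K) (hPmonic : P.Monic) (hPirr : Irreducible P)
    (d : ℕ) (hd : P.natDegree = d)
    (r : ℕ) {sz : Fin r → ℕ} (B : ∀ l, Matrix (Fin (sz l)) (Fin (sz l)) K)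
    (kk : Fin r → ℕ) (hk : ∀ l, 1 ≤ kk l)
    (hmin : ∀ l, minpoly K (B l) = P ^ kk l)
    (hchar : ∀ l, (B l).charpoly = P ^ kk l) :
    ∀ j : ℕ,
      Module.finrank K
          (LinearMap.ker
            ((Polynomial.aeval (Matrix.blockDiagonal' B) P ^ j).mulVecLin)) =
        d * ∑ l, min j (kk l) ∧
      Module.finrank K
          (LinearMap.ker
            ((Polynomial.aeval (Matrix.blockDiagonal' B) P ^ j).mulVecLin)) =
        d * ((∑ k ∈ Finset.Icc 1 j,
                k * (Finset.univ.filter (fun l => kk l = k)).card) +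
             ∑ k ∈ Finset.Icc (j + 1) (Finset.univ.sup kk),
                j * (Finset.univ.filter (fun l => kk l = k)).card) := by
  subst hd
  exact nullity_aeval_pow_blockDiagonal'_general P B kk hmin hchar
end
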